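/- arXiv:1604.01513 — 2 statements merged into one kernel-verified Lean document; each statement's English description precedes it below -/
import Mathlib

section
/- Let p be a prime, G a finite p-group of order p^n, and M, M' two finite-dimensional representations of G over finite fields Λ, Λ' respectively, both of characteristic different from p (the characteristics of Λ and Λ' may differ). If dim_Λ M^σ = dim_{Λ'} M'^σ for every σ ∈ G, then for every subgroup H ≤ G, dim_Λ M^H = dim_{Λ'} M'^H, where M^H denotes the H-fixed subspace. -/
/-!
The dimension of `M^G` can be computed from the dimensions of the fixed spaces of cyclic subgroups
by a recursion that does not depend on the field. If `G` is a noncyclic `p`-group, it has a normal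
subgroup `N` with `G ⧸ N ≃ (ℤ/p)²` (`exists_normal_index_sq`). Let `S` be the set of the `p + 1`
subgroups strictly between `N` and `G`. Then
`p * dim M^G + dim M^N = ∑ L ∈ S, dim M^L` (`finrank_grid`),
which expresses `dim M^G` through proper subgroups, and induction on `|G|` ends at cyclic groups,
where the fixed space is that of a generator.

Traces determine a dimension only modulo the characteristic, so the identity is proved with ranks of
orthogonal idempotents. Write `e_H` for the average of `ρ` over `H`, a projection onto `M^H`. Since
the members of `S` partition `G \ N` (`exists_grid`), `∑ L ∈ S, e_L = p e_G + e_N`; since distinct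
members of `S` generate `G`, `e_L e_L' = e_G`. Hence `e_N` is the sum of the pairwise orthogonal
idempotents `e_G` and `e_L - e_G`, `L ∈ S`, and the rank of such a sum is the sum of the ranks.
-/

/-- The dimension of the fixed subspace of an endomorphism. -/
noncomputable def fixDim {Λ M : Type*} [Field Λ] [AddCommGroup M] [Module Λ M]
    (f : M →ₗ[Λ] M) : ℕ :=
  Module.finrank Λ (LinearMap.ker (f - LinearMap.id))

/-- The submodule of vectors fixed by every element of a subgroup `H` under a
representation `ρ`. -/
def fixSub {Λ G M : Type*} [Field Λ] [Group G] [AddCommGroup M] [Module Λ M]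
    (ρ : Representation Λ G M) (H : Subgroup G) : Submodule Λ M :=
  ⨅ (σ : G) (_ : σ ∈ H), LinearMap.ker (ρ σ - LinearMap.id)

/-! ### Noncyclic `p`-groups -/

theorem eq_of_le_of_index_eq {G : Type*} [Group G] [Finite G] {K L : Subgroup G} (h : K ≤ L)
    (hi : K.index = L.index) : K = L := by
  refine Subgroup.eq_of_le_of_card_ge h ?_
  have h1 := K.card_mul_index
  rw [← L.card_mul_index, hi] at h1
  exact (Nat.eq_of_mul_eq_mul_right (Nat.pos_of_ne_zero L.index_ne_zero_of_finite) h1).ge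

/-- A noncyclic `p`-group has a quotient of order `p ^ 2` and exponent `p`: divide by the intersection
of two distinct subgroups of index `p`. -/
theorem exists_normal_index_sq {p n : ℕ} (hp : p.Prime) {G : Type*} [Group G] [Finite G]
    (hG : Nat.card G = p ^ n) (hc : ¬ IsCyclic G) :
    ∃ N : Subgroup G, N.Normal ∧ N.index = p ^ 2 ∧ ∀ g : G, g ^ p ∈ N := by
  have := Fact.mk hp
  have hn : n ≠ 0 := by
    rintro rfl
    rw [pow_zero, Nat.card_eq_one_iff_unique] at hG
    have := hG.1
    exact hc inferInstance
  obtain ⟨m, rfl⟩ := Nat.exists_eq_succ_of_ne_zero hn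
  have hidx : ∀ K : Subgroup G, Nat.card K = p ^ m → K.index = p := fun K hK => by
    have := K.card_mul_index
    rw [hK, hG, pow_succ] at this
    exact Nat.eq_of_mul_eq_mul_left (pow_pos hp.pos m) this
  have hnor : ∀ K : Subgroup G, K.index = p → K.Normal := fun K hK =>
    Subgroup.normal_of_index_eq_minFac_card (by rw [hK, hG, hp.pow_minFac hn])
  obtain ⟨A, hA⟩ := Sylow.exists_subgroup_card_pow_prime (G := G) p (n := m)
    (hG ▸ pow_dvd_pow p m.le_succ)
  have hA' := hidx A hA
  have hAtop : A ≠ ⊤ := by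
    rw [Ne, ← Subgroup.index_eq_one, hA']; exact hp.ne_one
  obtain ⟨g, hg⟩ : ∃ g, g ∉ A := by
    by_contra! hall
    exact hAtop (Subgroup.eq_top_iff' A |>.2 hall)
  obtain ⟨k, hk, hkc⟩ := (Nat.dvd_prime_pow hp).1 (hG ▸ (Subgroup.zpowers g).card_subgroup_dvd_card)
  have hkm : k ≤ m := by
    by_contra! hlt
    have hk' : k = m + 1 := by omega
    have : Subgroup.zpowers g = ⊤ := Subgroup.eq_top_of_card_eq _ (by rw [hkc, hG, hk'])
    exact hc ⟨g, fun x => (Subgroup.eq_top_iff' _).1 this x⟩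
  obtain ⟨B, hB, hgB⟩ := Sylow.exists_subgroup_card_pow_prime_le p (m := m)
    (hG ▸ pow_dvd_pow p m.le_succ) (Subgroup.zpowers g) hkc hkm
  have hB' := hidx B hB
  have := hnor A hA'
  have := hnor B hB'
  refine ⟨A ⊓ B, inferInstance, ?_, fun x => ⟨?_, ?_⟩⟩
  · have hle : (A ⊓ B).index ≤ p ^ 2 := by
      have := Subgroup.index_inf_le (H := A) (K := B)
      rwa [hA', hB', ← sq] at this
    obtain ⟨j, hj, hjc⟩ := (Nat.dvd_prime_pow hp).1 (hG ▸ (A ⊓ B).index_dvd_card)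
    rw [hjc] at hle ⊢
    have hj2 := (Nat.pow_le_pow_iff_right hp.one_lt).1 hle
    have hd := Subgroup.index_dvd_of_le (inf_le_right : A ⊓ B ≤ B)
    interval_cases j
    · rw [hjc, hB', pow_zero] at hd
      exact absurd (Nat.dvd_one.1 hd) hp.ne_one
    · have := eq_of_le_of_index_eq (inf_le_right : A ⊓ B ≤ B) (by rw [hjc, hB', pow_one])
      exact absurd (inf_eq_right.1 this (hgB (Subgroup.mem_zpowers g))) hg
    · rfl
  · have := A.pow_index_mem x; rwa [hA'] at this
  · have := B.pow_index_mem x; rwa [hB'] at this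

/-- In a noncyclic `p`-group there is a subgroup `N` and a family `S` of normal subgroups of index `p`
containing `N` which pairwise generate `G` and partition `G \ N`: the preimages of the lines of
`G ⧸ N ≃ (ℤ/p)²`. -/
theorem exists_grid {p n : ℕ} (hp : p.Prime) {G : Type*} [Group G] [Finite G]
    (hG : Nat.card G = p ^ n) (hc : ¬ IsCyclic G) :
    ∃ (N : Subgroup G) (S : Finset (Subgroup G)), N.index = p ^ 2 ∧
      (∀ L ∈ S, L.Normal ∧ L.index = p ∧ N ≤ L) ∧
      (∀ L ∈ S, ∀ L' ∈ S, L ≠ L' → L ⊔ L' = ⊤) ∧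
      ∀ g ∉ N, ∃! L, L ∈ S ∧ g ∈ L := by
  classical
  have := Fintype.ofFinite (Subgroup G)
  obtain ⟨N, hN, hNi, hNp⟩ := exists_normal_index_sq hp hG hc
  have hn : n ≠ 0 := by
    rintro rfl
    rw [pow_zero, Nat.card_eq_one_iff_unique] at hG
    have := hG.1
    exact hc inferInstance
  have hp2 : p ^ 2 ≠ p := fun h => by
    have := (Nat.pow_lt_pow_iff_right hp.one_lt).2 one_lt_two
    rw [h, pow_one] at this
    exact this.false
  -- An overgroup of `N` that is neither `N` nor `G` has index `p`.
  have hmid : ∀ L : Subgroup G, N ≤ L → N ≠ L → L ≠ ⊤ → L.index = p := fun L h1 h2 h3 => by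
    obtain ⟨j, hj, hjc⟩ := (Nat.dvd_prime_pow hp).1 (hNi ▸ Subgroup.index_dvd_of_le h1)
    interval_cases j
    · exact absurd (Subgroup.index_eq_one.1 (by simpa using hjc)) h3
    · simpa using hjc
    · exact absurd (eq_of_le_of_index_eq h1 (hNi.trans hjc.symm)) h2
  refine ⟨N, Finset.univ.filter fun L => N ≤ L ∧ L.index = p, hNi, fun L hL => ?_, fun L hL L' hL' hne => ?_,
    fun g hg => ?_⟩
  · simp only [Finset.mem_filter, Finset.mem_univ, true_and] at hL
    exact ⟨Subgroup.normal_of_index_eq_minFac_card (by rw [hL.2, hG, hp.pow_minFac hn]),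
      hL.2, hL.1⟩
  · simp only [Finset.mem_filter, Finset.mem_univ, true_and] at hL hL'
    by_contra htop
    have hi := hmid (L ⊔ L') (hL.1.trans le_sup_left)
      (fun h => hp2 (by
        have hLN : L = N := le_antisymm (h.symm ▸ le_sup_left) hL.1
        rw [← hNi, ← hLN, hL.2])) htop
    exact hne ((eq_of_le_of_index_eq le_sup_left (hL.2.trans hi.symm)).trans
      (eq_of_le_of_index_eq le_sup_right (hL'.2.trans hi.symm)).symm)
  · have hle : N ≤ N ⊔ Subgroup.zpowers g := le_sup_left
    have hgm : g ∈ N ⊔ Subgroup.zpowers g :=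
      (le_sup_right : Subgroup.zpowers g ≤ _) (Subgroup.mem_zpowers g)
    have hntop : N ⊔ Subgroup.zpowers g ≠ ⊤ := fun h => by
      have hgen : ∀ x : G ⧸ N, x ∈ Subgroup.zpowers (g : G ⧸ N) := fun x => by
        induction x using QuotientGroup.induction_on with
        | H y =>
          obtain ⟨a, ha, b, ⟨k, rfl⟩, rfl⟩ := Subgroup.mem_sup_of_normal_left.1 ((Subgroup.eq_top_iff' _).1 h y)
          exact ⟨k, by simp [(QuotientGroup.eq_one_iff a).2 ha]⟩
      have hord := orderOf_eq_card_of_forall_mem_zpowers hgen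
      have hdvd : orderOf (g : G ⧸ N) ∣ p := orderOf_dvd_of_pow_eq_one <| by
        rw [← QuotientGroup.mk_pow, QuotientGroup.eq_one_iff]
        exact hNp g
      rw [hord, ← Subgroup.index_eq_card, hNi] at hdvd
      exact absurd (Nat.le_of_dvd hp.pos hdvd)
        (by simpa using (Nat.pow_lt_pow_iff_right hp.one_lt).2 one_lt_two)
    refine ⟨N ⊔ Subgroup.zpowers g, ⟨?_, hgm⟩, ?_⟩
    · simpa [hle] using hmid _ hle (fun h => hg (h ▸ hgm)) hntop
    · rintro L ⟨hL, hgL⟩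
      simp only [Finset.mem_filter, Finset.mem_univ, true_and] at hL
      exact (eq_of_le_of_index_eq (sup_le hL.1 (by simpa using hgL))
        ((hmid _ hle (fun h => hg (h ▸ hgm)) hntop).trans hL.2.symm)).symm

open Classical in
theorem sum_grid {G W : Type*} [Group G] [Fintype G] [AddCommGroup W]
    {N : Subgroup G} {S : Finset (Subgroup G)} (hle : ∀ L ∈ S, N ≤ L)
    (hu : ∀ g ∉ N, ∃! L, L ∈ S ∧ g ∈ L) (f : G → W) :
    ∑ L ∈ S, ∑ g with g ∈ L, f g + ∑ g with g ∈ N, f g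
      = ∑ g, f g + S.card • ∑ g with g ∈ N, f g := by
  simp only [Finset.sum_filter]
  rw [Finset.sum_comm, Finset.smul_sum, ← Finset.sum_add_distrib, ← Finset.sum_add_distrib]
  refine Finset.sum_congr rfl fun g _ => ?_
  by_cases hg : g ∈ N
  · rw [Finset.sum_congr rfl fun L hL => if_pos (hle L hL hg)]
    simp [hg, add_comm]
  · obtain ⟨L, ⟨hL, hgL⟩, hL'⟩ := hu g hg
    rw [Finset.sum_eq_single_of_mem L hL fun K hK hne => if_neg fun h => hne (hL' K ⟨hK, h⟩)]
    simp [hg, hgL]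

/-- The plane `(ℤ/p)²` has `p + 1` lines through the origin. -/
theorem card_grid {p : ℕ} (hp : p.Prime) {G : Type*} [Group G] [Finite G]
    {N : Subgroup G} {S : Finset (Subgroup G)} (hN : N.index = p ^ 2)
    (hS : ∀ L ∈ S, L.index = p) (hle : ∀ L ∈ S, N ≤ L)
    (hu : ∀ g ∉ N, ∃! L, L ∈ S ∧ g ∈ L) : S.card = p + 1 := by
  classical
  have := Fintype.ofFinite G
  have hcard : ∀ K : Subgroup G, ∑ g : G with g ∈ K, (1 : ℤ) = Nat.card K := fun K => by
    simp [Nat.card_eq_fintype_card, Fintype.card_subtype]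
  have h := sum_grid hle hu fun _ => (1 : ℤ)
  have hpos : (0 : ℤ) < Nat.card N := by exact_mod_cast Nat.card_pos
  have hNG : (Nat.card N : ℤ) * p ^ 2 = Nat.card G := by
    rw [← N.card_mul_index, hN]; push_cast; rfl
  have hp0 : (p : ℤ) ≠ 0 := by exact_mod_cast hp.ne_zero
  have hL : ∀ L ∈ S, (Nat.card L : ℤ) = p * Nat.card N := fun L hLS => by
    have h1 : (Nat.card L : ℤ) * p = Nat.card G := by
      rw [← L.card_mul_index, hS L hLS]; push_cast; rfl
    apply mul_right_cancel₀ hp0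
    linear_combination h1 - hNG
  simp only [hcard] at h
  rw [Finset.sum_congr rfl hL] at h
  simp only [Finset.sum_const, Finset.card_univ, ← Nat.card_eq_fintype_card, nsmul_eq_mul, mul_one,
    ← hNG] at h
  have hp1 : (p : ℤ) - 1 ≠ 0 := by
    have := hp.one_lt
    omega
  have : (S.card : ℤ) = p + 1 := by
    apply mul_right_cancel₀ hp1
    apply mul_right_cancel₀ hpos.ne'
    linear_combination h
  exact_mod_cast this

/-! ### Ranks of orthogonal idempotents -/

theorem finrank_range_add {Λ M : Type*} [Field Λ] [AddCommGroup M] [Module Λ M]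
    [FiniteDimensional Λ M] {e f : Module.End Λ M} (he : e * e = e) (hf : f * f = f)
    (hef : e * f = 0) (hfe : f * e = 0) :
    Module.finrank Λ (LinearMap.range (e + f)) =
      Module.finrank Λ (LinearMap.range e) + Module.finrank Λ (LinearMap.range f) := by
  have app : ∀ {a b c : Module.End Λ M}, a * b = c → ∀ x, a (b x) = c x :=
    fun h x => LinearMap.congr_fun h x
  have hsup : LinearMap.range (e + f) = LinearMap.range e ⊔ LinearMap.range f := by
    apply le_antisymm
    · rintro _ ⟨x, rfl⟩
      exact Submodule.add_mem_sup ⟨x, rfl⟩ ⟨x, rfl⟩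
    · refine sup_le ?_ ?_
      · rintro _ ⟨x, rfl⟩
        exact ⟨e x, by simp [app he, app hfe]⟩
      · rintro _ ⟨x, rfl⟩
        exact ⟨f x, by simp [app hf, app hef]⟩
  have hinf : LinearMap.range e ⊓ LinearMap.range f = ⊥ := by
    rw [eq_bot_iff]
    rintro _ ⟨⟨x, rfl⟩, ⟨y, hy⟩⟩
    have := app hef y
    rw [hy, app he] at this
    simpa using this
  have := Submodule.finrank_sup_add_finrank_inf_eq (LinearMap.range e) (LinearMap.range f)
  rwa [← hsup, hinf, finrank_bot, add_zero] at this

theorem finrank_range_sum {Λ M ι : Type*} [Field Λ] [AddCommGroup M] [Module Λ M]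
    [FiniteDimensional Λ M] (S : Finset ι) (e : ι → Module.End Λ M)
    (he : ∀ i ∈ S, e i * e i = e i) (ho : ∀ i ∈ S, ∀ j ∈ S, i ≠ j → e i * e j = 0) :
    Module.finrank Λ (LinearMap.range (∑ i ∈ S, e i)) =
      ∑ i ∈ S, Module.finrank Λ (LinearMap.range (e i)) := by
  classical
  have hidem : ∀ T ⊆ S, (∑ i ∈ T, e i) * (∑ i ∈ T, e i) = ∑ i ∈ T, e i := fun T hT => by
    rw [Finset.sum_mul_sum]
    refine Finset.sum_congr rfl fun i hi => ?_
    rw [Finset.sum_eq_single_of_mem i hi fun j hj hne => ho i (hT hi) j (hT hj) hne.symm,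
      he i (hT hi)]
  suffices ∀ T ⊆ S, Module.finrank Λ (LinearMap.range (∑ i ∈ T, e i)) =
      ∑ i ∈ T, Module.finrank Λ (LinearMap.range (e i)) from this S subset_rfl
  intro T
  induction T using Finset.induction_on with
  | empty => intro; rw [Finset.sum_empty, Finset.sum_empty, LinearMap.range_zero, finrank_bot]
  | insert a T ha ih =>
    intro hT
    have haS := hT (Finset.mem_insert_self a T)
    have hTS := (Finset.subset_insert a T).trans hT
    have hne : ∀ i ∈ T, a ≠ i := fun i hi h => ha (h ▸ hi)
    rw [Finset.sum_insert ha, Finset.sum_insert ha, ← ih hTS]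
    refine finrank_range_add (he a haS) (hidem T hTS) ?_ ?_
    · rw [Finset.mul_sum]
      exact Finset.sum_eq_zero fun i hi => ho a haS i (hTS hi) (hne i hi)
    · rw [Finset.sum_mul]
      exact Finset.sum_eq_zero fun i hi => ho i (hTS hi) a haS (hne i hi).symm

/-! ### Averaging operators -/

theorem mem_fixSub {Λ G M : Type*} [Field Λ] [Group G] [AddCommGroup M] [Module Λ M]
    (ρ : Representation Λ G M) (H : Subgroup G) (x : M) :
    x ∈ fixSub ρ H ↔ ∀ g ∈ H, ρ g x = x := by
  simp [fixSub, sub_eq_zero]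

theorem card_ne_zero_of_pow {Λ G : Type*} [Field Λ] [Group G] {p n : ℕ} (hp : p.Prime) (hG : Nat.card G = p ^ n)
    (hchar : ringChar Λ ≠ p) (K : Subgroup G) : (Nat.card K : Λ) ≠ 0 := by
  obtain ⟨k, -, hk⟩ := (Nat.dvd_prime_pow hp).1 (hG ▸ K.card_subgroup_dvd_card)
  rw [hk, Nat.cast_pow]
  refine pow_ne_zero _ fun h => ?_
  exact (hp.eq_one_or_self_of_dvd _ ((ringChar.spec Λ p).1 h)).elim
    (CharP.ringChar_ne_one) hchar

open Classical in
/-- The averaging operator `(1/|H|) ∑_{g ∈ H} ρ g`; it is zero when `|H|` vanishes in `Λ`. -/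
noncomputable def avg {Λ G M : Type*} [Field Λ] [Group G] [Fintype G] [AddCommGroup M]
    [Module Λ M] (ρ : Representation Λ G M) (H : Subgroup G) : Module.End Λ M :=
  (Nat.card H : Λ)⁻¹ • ∑ g with g ∈ H, ρ g

section avg

variable {Λ G M : Type*} [Field Λ] [Group G] [Fintype G] [AddCommGroup M]
    [Module Λ M] (ρ : Representation Λ G M)

theorem rho_mul_avg {H : Subgroup G} {a : G} (ha : a ∈ H) : ρ a * avg ρ H = avg ρ H := by
  classical
  rw [avg, mul_smul_comm, Finset.mul_sum]
  congr 1
  refine Finset.sum_equiv (Equiv.mulLeft a) (fun g => ?_) fun g _ => ?_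
  · simp [Subgroup.mul_mem_cancel_left H ha]
  · simp

theorem rho_mul_avg_comm {H : Subgroup G} (hH : H.Normal) (a : G) :
    ρ a * avg ρ H = avg ρ H * ρ a := by
  classical
  rw [avg, mul_smul_comm, smul_mul_assoc, Finset.mul_sum, Finset.sum_mul]
  congr 1
  refine Finset.sum_equiv (MulAut.conj a).toEquiv (fun g => ?_) fun g _ => ?_
  · simpa using hH.mem_comm_iff (a := a * g) (b := a⁻¹) |>.symm
  · simp [← map_mul]

variable {ρ}

theorem avg_apply {H : Subgroup G} (h0 : (Nat.card H : Λ) ≠ 0) {x : M}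
    (hx : ∀ g ∈ H, ρ g x = x) : avg ρ H x = x := by
  classical
  rw [avg, LinearMap.smul_apply, LinearMap.sum_apply,
    Finset.sum_congr rfl fun g hg => hx g (Finset.mem_filter.1 hg).2, Finset.sum_const,
    ← Fintype.card_subtype, ← Nat.card_eq_fintype_card, ← Nat.cast_smul_eq_nsmul Λ]
  exact inv_smul_smul₀ h0 x

theorem range_avg {H : Subgroup G} (h0 : (Nat.card H : Λ) ≠ 0) :
    LinearMap.range (avg ρ H) = fixSub ρ H := by
  ext x
  rw [mem_fixSub]
  refine ⟨?_, fun hx => ⟨x, avg_apply h0 hx⟩⟩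
  rintro ⟨y, rfl⟩ g hg
  exact LinearMap.congr_fun (rho_mul_avg ρ hg) y

theorem avg_mul_of_fixed {H : Subgroup G} (h0 : (Nat.card H : Λ) ≠ 0) {f : Module.End Λ M}
    (hf : ∀ g ∈ H, ρ g * f = f) : avg ρ H * f = f :=
  LinearMap.ext fun x => avg_apply h0 fun g hg => LinearMap.congr_fun (hf g hg) x

theorem avg_mul_avg {K H : Subgroup G} (h0 : (Nat.card K : Λ) ≠ 0) (hle : K ≤ H) :
    avg ρ K * avg ρ H = avg ρ H :=
  avg_mul_of_fixed h0 fun _ hg => rho_mul_avg ρ (hle hg)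

theorem avg_mul_top {K : Subgroup G} (h0 : (Nat.card K : Λ) ≠ 0) :
    avg ρ ⊤ * avg ρ K = avg ρ ⊤ := by
  classical
  have h : ∀ a : G, avg ρ ⊤ * ρ a = avg ρ ⊤ := fun a => by
    rw [← rho_mul_avg_comm ρ inferInstance, rho_mul_avg ρ (Subgroup.mem_top a)]
  conv_lhs => rw [avg.eq_def ρ K]
  rw [mul_smul_comm, Finset.mul_sum, Finset.sum_congr rfl fun g _ => h g, Finset.sum_const,
    ← Fintype.card_subtype, ← Nat.card_eq_fintype_card, ← Nat.cast_smul_eq_nsmul Λ]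
  exact inv_smul_smul₀ h0 _

theorem avg_mul_avg_of_sup (h0 : ∀ K : Subgroup G, (Nat.card K : Λ) ≠ 0) {L L' : Subgroup G}
    (hL : L.Normal) (hsup : L ⊔ L' = ⊤) : avg ρ L * avg ρ L' = avg ρ ⊤ := by
  have key : avg ρ ⊤ * (avg ρ L * avg ρ L') = avg ρ L * avg ρ L' := by
    refine avg_mul_of_fixed (h0 _) fun g _ => ?_
    obtain ⟨a, ha, b, hb, rfl⟩ := Subgroup.mem_sup_of_normal_left.1 ((Subgroup.eq_top_iff' _).1 hsup g)
    rw [map_mul, mul_assoc, ← mul_assoc (ρ b), rho_mul_avg_comm ρ hL b, mul_assoc,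
      rho_mul_avg ρ hb, ← mul_assoc, rho_mul_avg ρ ha]
  rw [← key, ← mul_assoc, avg_mul_top (h0 _), avg_mul_top (h0 _)]

/-- Dimension count for `(ℤ/p)²` acting on the `N`-fixed vectors. The operators `avg ρ L - avg ρ ⊤`,
for `L ∈ S`, together with `avg ρ ⊤`, are orthogonal idempotents with sum `avg ρ N`. -/
theorem finrank_grid [FiniteDimensional Λ M] {p : ℕ} (hp : p.Prime)
    (h0 : ∀ K : Subgroup G, (Nat.card K : Λ) ≠ 0)
    {N : Subgroup G} {S : Finset (Subgroup G)} (hN : N.index = p ^ 2)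
    (hS : ∀ L ∈ S, L.Normal ∧ L.index = p ∧ N ≤ L)
    (hsup : ∀ L ∈ S, ∀ L' ∈ S, L ≠ L' → L ⊔ L' = ⊤)
    (hu : ∀ g ∉ N, ∃! L, L ∈ S ∧ g ∈ L) :
    p * Module.finrank Λ (fixSub ρ ⊤) + Module.finrank Λ (fixSub ρ N) =
      ∑ L ∈ S, Module.finrank Λ (fixSub ρ L) := by
  classical
  have hcard := card_grid hp hN (fun L hL => (hS L hL).2.1) (fun L hL => (hS L hL).2.2) hu
  have hidem : ∀ K : Subgroup G, avg ρ K * avg ρ K = avg ρ K := fun K =>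
    avg_mul_avg (h0 K) le_rfl
  have htop : ∀ K : Subgroup G, avg ρ K * avg ρ ⊤ = avg ρ ⊤ := fun K =>
    avg_mul_avg (h0 K) le_top
  have htop' : ∀ K : Subgroup G, avg ρ ⊤ * avg ρ K = avg ρ ⊤ := fun K => avg_mul_top (h0 K)
  -- Clear denominators: `∑_{g ∈ K} ρ g = |K| • avg ρ K`.
  have hsumK : ∀ K : Subgroup G, ∑ g with g ∈ K, ρ g = (Nat.card K : Λ) • avg ρ K := fun K => by
    rw [avg, smul_inv_smul₀ (h0 K)]
  have hNG : (Nat.card N : Λ) * p ^ 2 = Nat.card (⊤ : Subgroup G) := by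
    rw [Subgroup.card_top, ← N.card_mul_index, hN]; push_cast; rfl
  have hp0 : (p : Λ) ≠ 0 := by
    intro h
    apply h0 ⊤
    rw [← hNG, h]; simp
  have hLc : ∀ L ∈ S, (Nat.card L : Λ) = p * Nat.card N := fun L hLS => by
    have h1 : (Nat.card L : Λ) * p = Nat.card (⊤ : Subgroup G) := by
      rw [Subgroup.card_top, ← L.card_mul_index, (hS L hLS).2.1]; push_cast; rfl
    apply mul_right_cancel₀ hp0
    linear_combination h1 - hNG
  have hsum : ∑ L ∈ S, avg ρ L = (p : Λ) • avg ρ ⊤ + avg ρ N := by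
    have h := sum_grid (fun L hL => (hS L hL).2.2) hu (fun g => ρ g)
    have ht : ∑ g, ρ g = (Nat.card (⊤ : Subgroup G) : Λ) • avg ρ ⊤ := by
      rw [← hsumK ⊤, Finset.filter_true_of_mem fun g _ => Subgroup.mem_top g]
    rw [ht] at h
    simp only [hsumK] at h
    rw [Finset.sum_congr rfl fun L hL => by rw [hLc L hL], ← Finset.smul_sum, hcard, ← hNG,
      add_smul, one_smul, ← add_assoc, add_left_inj, ← Nat.cast_smul_eq_nsmul Λ] at h
    have hpN : (p * Nat.card N : Λ) ≠ 0 := mul_ne_zero hp0 (h0 N)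
    apply smul_right_injective _ hpN
    simp only
    rw [h]
    module
  have hdecomp : avg ρ N = avg ρ ⊤ + ∑ L ∈ S, (avg ρ L - avg ρ ⊤) := by
    rw [Finset.sum_sub_distrib, hsum, Finset.sum_const, hcard, ← Nat.cast_smul_eq_nsmul Λ]
    push_cast
    module
  have hd : ∀ L, (avg ρ L - avg ρ ⊤) * (avg ρ L - avg ρ ⊤) = avg ρ L - avg ρ ⊤ := fun L => by
    simp only [mul_sub, sub_mul, hidem, htop, htop']; abel
  have ho : ∀ L ∈ S, ∀ L' ∈ S, L ≠ L' →
      (avg ρ L - avg ρ ⊤) * (avg ρ L' - avg ρ ⊤) = 0 := fun L hL L' hL' hne => by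
    simp only [mul_sub, sub_mul, hidem, htop, htop',
      avg_mul_avg_of_sup h0 (hS L hL).1 (hsup L hL L' hL' hne)]; abel
  have hds : (∑ L ∈ S, (avg ρ L - avg ρ ⊤)) * (∑ L ∈ S, (avg ρ L - avg ρ ⊤)) =
      ∑ L ∈ S, (avg ρ L - avg ρ ⊤) := by
    rw [Finset.sum_mul_sum]
    refine Finset.sum_congr rfl fun i hi => ?_
    rw [Finset.sum_eq_single_of_mem i hi fun j hj hne => ho i hi j hj hne.symm, hd]
  have hrN : Module.finrank Λ (fixSub ρ N) = Module.finrank Λ (fixSub ρ ⊤) +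
      ∑ L ∈ S, Module.finrank Λ (LinearMap.range (avg ρ L - avg ρ ⊤)) := by
    rw [← finrank_range_sum S _ (fun L _ => hd L) ho, ← range_avg (h0 N), ← range_avg (h0 ⊤),
      hdecomp]
    refine finrank_range_add (hidem ⊤) hds ?_ ?_
    · rw [Finset.mul_sum]
      exact Finset.sum_eq_zero fun L _ => by rw [mul_sub, htop', hidem, sub_self]
    · rw [Finset.sum_mul]
      exact Finset.sum_eq_zero fun L _ => by rw [sub_mul, htop, hidem, sub_self]
  have hrL : ∀ L ∈ S, Module.finrank Λ (fixSub ρ L) = Module.finrank Λ (fixSub ρ ⊤) +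
      Module.finrank Λ (LinearMap.range (avg ρ L - avg ρ ⊤)) := fun L _ => by
    rw [← range_avg (h0 L), ← range_avg (h0 ⊤), ← finrank_range_add (hidem ⊤) (hd L)
      (by rw [mul_sub, htop', hidem, sub_self]) (by rw [sub_mul, htop, hidem, sub_self]),
      add_sub_cancel]
  rw [Finset.sum_congr rfl hrL, Finset.sum_add_distrib, Finset.sum_const, hcard, hrN, smul_eq_mul]
  ring

end avg

/-! ### Induction on the order of the group -/

theorem fixSub_zpowers {Λ G M : Type*} [Field Λ] [Group G] [AddCommGroup M] [Module Λ M]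
    (ρ : Representation Λ G M) (g : G) :
    fixSub ρ (Subgroup.zpowers g) = LinearMap.ker (ρ g - LinearMap.id) := by
  ext x
  rw [mem_fixSub, LinearMap.mem_ker, LinearMap.sub_apply, LinearMap.id_apply, sub_eq_zero]
  refine ⟨fun h => h g (Subgroup.mem_zpowers g), fun h => ?_⟩
  -- The stabilizer of `x` is a subgroup containing `g`.
  let T : Subgroup G :=
    { carrier := {a | ρ a x = x}
      one_mem' := by simp
      mul_mem' := fun {a b} ha hb => by
        simp only [Set.mem_ofPred_eq] at ha hb ⊢
        rw [map_mul, Module.End.mul_apply, hb, ha]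
      inv_mem' := fun {a} ha => by
        simp only [Set.mem_ofPred_eq] at ha ⊢
        conv_lhs => rw [← ha]
        rw [← Module.End.mul_apply, ← map_mul, inv_mul_cancel, map_one, Module.End.one_apply] }
  exact fun a ha => (Subgroup.zpowers_le.2 (show g ∈ T from h)) ha

theorem fixSub_comp_subtype {Λ G M : Type*} [Field Λ] [Group G] [AddCommGroup M] [Module Λ M]
    (ρ : Representation Λ G M) (H : Subgroup G) :
    fixSub (MonoidHom.comp ρ H.subtype : Representation Λ H M) ⊤ = fixSub ρ H := by
  ext x
  simp [mem_fixSub]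

/-- The whole group in place of an arbitrary subgroup; the group varies in the induction, so that
the induction hypothesis applies to each proper subgroup with the restricted representations. -/
theorem finrank_fixSub_eq {p : ℕ} (hp : p.Prime)
    {Λ Λ' : Type*} [Field Λ] [Field Λ']
    (hchar : ringChar Λ ≠ p) (hchar' : ringChar Λ' ≠ p)
    {M M' : Type*} [AddCommGroup M] [Module Λ M] [FiniteDimensional Λ M]
    [AddCommGroup M'] [Module Λ' M'] [FiniteDimensional Λ' M'] (n : ℕ) :
    ∀ {G : Type*} [Group G] [Finite G], Nat.card G = p ^ n →
    ∀ (ρ : Representation Λ G M) (ρ' : Representation Λ' G M'),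
      (∀ σ : G, fixDim (ρ σ) = fixDim (ρ' σ)) →
      Module.finrank Λ (fixSub ρ ⊤) = Module.finrank Λ' (fixSub ρ' ⊤) := by
  induction n using Nat.strong_induction_on with
  | _ n ih =>
  intro G _ _ hG ρ ρ' h
  have := Fintype.ofFinite G
  by_cases hc : IsCyclic G
  · obtain ⟨g, hg⟩ := hc
    rw [← (Subgroup.eq_top_iff' (Subgroup.zpowers g)).2 fun x => hg x, fixSub_zpowers, fixSub_zpowers]
    exact h g
  have hlt : ∀ K : Subgroup G, K.index ≠ 1 →
      Module.finrank Λ (fixSub ρ K) = Module.finrank Λ' (fixSub ρ' K) := fun K hK => by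
    obtain ⟨k, hkn, hk⟩ := (Nat.dvd_prime_pow hp).1 (hG ▸ K.card_subgroup_dvd_card)
    have hne : k ≠ n := by
      rintro rfl
      exact hK (Subgroup.index_eq_one.2 (Subgroup.eq_top_of_card_eq _ (hk.trans hG.symm)))
    have := ih k (lt_of_le_of_ne hkn hne) hk (MonoidHom.comp ρ K.subtype)
      (MonoidHom.comp ρ' K.subtype) fun σ => h σ
    rwa [fixSub_comp_subtype ρ K, fixSub_comp_subtype ρ' K] at this
  obtain ⟨N, S, hN, hS, hsup, hu⟩ := exists_grid hp hG hc
  have h1 := finrank_grid (ρ := ρ) hp (card_ne_zero_of_pow hp hG hchar) hN hS hsup hu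
  have h2 := finrank_grid (ρ := ρ') hp (card_ne_zero_of_pow hp hG hchar') hN hS hsup hu
  rw [Finset.sum_congr rfl fun L hL => hlt L (by rw [(hS L hL).2.1]; exact hp.ne_one), ← h2,
    hlt N (by rw [hN]; exact (Nat.one_lt_pow two_ne_zero hp.one_lt).ne'), add_left_inj] at h1
  exact Nat.eq_of_mul_eq_mul_left hp.pos h1

theorem stmt3 {p n : ℕ} (hp : p.Prime) {G : Type*} [Group G] [Fintype G]
    (hG : Fintype.card G = p ^ n)
    {Λ Λ' : Type*} [Field Λ] [Fintype Λ] [Field Λ'] [Fintype Λ']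
    (hchar : ringChar Λ ≠ p) (hchar' : ringChar Λ' ≠ p)
    {M M' : Type*} [AddCommGroup M] [Module Λ M] [FiniteDimensional Λ M]
    [AddCommGroup M'] [Module Λ' M'] [FiniteDimensional Λ' M']
    (ρ : Representation Λ G M) (ρ' : Representation Λ' G M')
    (h : ∀ σ : G, fixDim (ρ σ) = fixDim (ρ' σ)) :
    ∀ H : Subgroup G,
      Module.finrank Λ (fixSub ρ H) = Module.finrank Λ' (fixSub ρ' H) := by
  intro H
  obtain ⟨k, -, hk⟩ := (Nat.dvd_prime_pow hp).1
    (hG ▸ Nat.card_eq_fintype_card (α := G) ▸ H.card_subgroup_dvd_card)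
  have := finrank_fixSub_eq hp hchar hchar' k hk (MonoidHom.comp ρ H.subtype)
    (MonoidHom.comp ρ' H.subtype) fun σ => h σ
  rwa [fixSub_comp_subtype ρ H, fixSub_comp_subtype ρ' H] at this
end

section
/- Let p be a prime, G a finite p-group, Λ a finite field of characteristic ≠ p, and M a finite-dimensional Λ-representation of G. Then the function s_M : G → ℚ, s_M(σ) = (1/(p−1))·(p·dim M^σ − dim M^{σ^p}), lies in the ℚ-span of the characters of irreducible ℚ-representations of G inside the space of class functions G → ℚ. -/
/-!
The function `σ ↦ s_M(σ)` is a class function, and it depends only on the cyclic subgroup generated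
by `σ`: the space `M^σ` is the fixed space of `⟨σ⟩`, and `⟨σ⟩` determines `⟨σ ^ p⟩`
(`sFun_isRatClass`). The theorem is therefore an instance of the fact that every `ℚ`-valued function
with these two invariance properties (`IsRatClass`) is a rational combination of irreducible
rational characters.

This fact follows from Artin's argument (`IsRatClass.mem_irrSpan`). The character of the
permutation representation on `G ⧸ ⟨g⟩` is nonnegative, positive at `g`, and vanishes at `u` unless
a conjugate of `u` lies in `⟨g⟩`. On elements of the same order as `g` it is thus supported on those
`u` for which `⟨u⟩` is conjugate to `⟨g⟩`. Such characters can be used to clear the values of a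
function on the elements of the largest order in its support, and induction on that order shows that
permutation characters span. Each of them is a sum of irreducible characters by Maschke's theorem
(`character_mem_irrSpan`).
-/

open CategoryTheory

/-- The function `s_M(σ) = (1/(p-1))·(p·dim M^σ − dim M^{σ^p})`. -/
noncomputable def sFun {Λ G M : Type*} [Field Λ] [Group G] [AddCommGroup M] [Module Λ M]
    (p : ℕ) (ρ : Representation Λ G M) : G → ℚ := fun σ =>
  (1 / ((p : ℚ) - 1)) * ((p : ℚ) * (fixDim (ρ σ) : ℚ) - (fixDim (ρ (σ ^ p)) : ℚ))

/-! ### Irreducible characters and Maschke's theorem -/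

/-- The rational span of the characters of the irreducible `ℚ`-representations of `G`. -/
abbrev irrSpan (G : Type) [Group G] : Submodule ℚ (G → ℚ) :=
  Submodule.span ℚ {f : G → ℚ | ∃ V : FDRep ℚ G, Simple V ∧ f = V.character}

/-- Irreducibility in terms of subrepresentations gives categorical simplicity in `FDRep`: a nonzero
monomorphism into `ρ` is injective, and its range is a nonzero subrepresentation. -/
lemma simple_of_isIrreducible {G V : Type} [Group G] [AddCommGroup V] [Module ℚ V]
    [FiniteDimensional ℚ V] (ρ : Representation ℚ G V) [hρ : ρ.IsIrreducible] :
    Simple (FDRep.of ρ) where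
  mono_isIso_iff_nonzero {Y} f hf := by
    have hnt : Nontrivial V := by
      by_contra h
      rw [not_nontrivial_iff_subsingleton] at h
      refine bot_ne_top (α := Subrepresentation ρ) ?_
      apply Subrepresentation.toSubmodule_injective
      exact Subsingleton.elim _ _
    constructor
    · rintro hi rfl
      obtain ⟨v, hv⟩ := exists_ne (0 : V)
      apply hv
      have h2 : 𝟙 (FDRep.of ρ) = 0 := by
        rw [← IsIso.inv_hom_id (0 : Y ⟶ FDRep.of ρ)]; simp
      exact congrArg (fun k : FDRep.of ρ ⟶ FDRep.of ρ => k.hom.hom.hom v) h2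
    · intro h0
      have hinj : Function.Injective f.hom.hom.hom := by
        have : Mono ((forget₂ (FGModuleCat ℚ) (ModuleCat ℚ)).map
          ((Action.forget (FGModuleCat ℚ) G).map f)) := inferInstance
        exact (ModuleCat.mono_iff_injective _).1 this
      have hcomm : ∀ (g : G) (y : Y.V), f.hom.hom.hom (Y.ρ g y) = ρ g (f.hom.hom.hom y) := by
        intro g y
        exact congrArg (fun k : Y.V ⟶ (FDRep.of ρ).V => k.hom.hom y) (f.comm g)
      let S : Subrepresentation ρ :=
        { toSubmodule := LinearMap.range f.hom.hom.hom
          apply_mem_toSubmodule := by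
            rintro g _ ⟨y, rfl⟩
            exact ⟨Y.ρ g y, hcomm g y⟩ }
      have hS : S = ⊤ := by
        refine (eq_bot_or_eq_top S).resolve_left fun hb => h0 ?_
        have hb' : LinearMap.range f.hom.hom.hom = ⊥ :=
          congrArg Subrepresentation.toSubmodule hb
        rw [LinearMap.range_eq_bot] at hb'
        ext y
        exact congrArg (fun k => k y) hb'
      have hsurj : Function.Surjective f.hom.hom.hom := by
        have h : LinearMap.range f.hom.hom.hom = ⊤ :=
          congrArg Subrepresentation.toSubmodule hS
        exact LinearMap.range_eq_top.1 h
      have : IsIso ((forget₂ (FGModuleCat ℚ) (ModuleCat ℚ)).map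
          ((Action.forget (FGModuleCat ℚ) G).map f)) :=
        (ConcreteCategory.isIso_iff_bijective _).2 ⟨hinj, hsurj⟩
      have : IsIso ((Action.forget (FGModuleCat ℚ) G).map f) :=
        isIso_of_reflects_iso _ (forget₂ (FGModuleCat ℚ) (ModuleCat ℚ))
      exact isIso_of_reflects_iso f (Action.forget (FGModuleCat ℚ) G)

/-- By Maschke's theorem, every character is a sum of irreducible ones (by induction on the dimension
`n` of the representation). -/
lemma character_mem_irrSpan {G : Type} [Group G] [Finite G] (n : ℕ) :
    ∀ {V : Type} [AddCommGroup V] [Module ℚ V] [FiniteDimensional ℚ V]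
      (ρ : Representation ℚ G V), Module.finrank ℚ V = n → ρ.character ∈ irrSpan G := by
  induction n using Nat.strong_induction_on with
  | _ n ih =>
  intro V _ _ _ ρ hn
  by_cases hirr : ρ.IsIrreducible
  · exact Submodule.subset_span ⟨FDRep.of ρ, simple_of_isIrreducible ρ, rfl⟩
  by_cases hV : Subsingleton V
  · have : ρ.character = 0 := by
      ext g
      simp [Representation.character, Subsingleton.elim (ρ g) 0]
    rw [this]; exact zero_mem _
  rw [not_subsingleton_iff_nontrivial] at hV
  have hnt : Nontrivial (Subrepresentation ρ) := by
    refine ⟨⊥, ⊤, fun h => bot_ne_top (α := Submodule ℚ V) ?_⟩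
    exact congrArg Subrepresentation.toSubmodule h
  obtain ⟨S, hSb, hSt⟩ : ∃ S : Subrepresentation ρ, S ≠ ⊥ ∧ S ≠ ⊤ := by
    by_contra! h
    exact hirr { eq_bot_or_eq_top := fun S => or_iff_not_imp_left.2 (h S) }
  obtain ⟨T, hST⟩ := exists_isCompl S
  have hc : IsCompl S.toSubmodule T.toSubmodule := by
    constructor
    · rw [disjoint_iff]
      exact congrArg Subrepresentation.toSubmodule (disjoint_iff.1 hST.1)
    · rw [codisjoint_iff]
      exact congrArg Subrepresentation.toSubmodule (codisjoint_iff.1 hST.2)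
  have hadd := Submodule.finrank_add_eq_of_isCompl hc
  have hSlt : Module.finrank ℚ S.toSubmodule < Module.finrank ℚ V :=
    Submodule.finrank_lt fun h => hSt (Subrepresentation.toSubmodule_injective h)
  have hSpos : Module.finrank ℚ S.toSubmodule ≠ 0 := fun h =>
    hSb (Subrepresentation.toSubmodule_injective (Submodule.finrank_eq_zero.1 h))
  have key : ρ.character = S.toRepresentation.character + T.toRepresentation.character := by
    ext g
    have hint : DirectSum.IsInternal (fun b : Bool => cond b S.toSubmodule T.toSubmodule) := by
      rw [DirectSum.isInternal_submodule_iff_isCompl _ (i := true) (j := false) (by simp)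
        (by ext b; cases b <;> simp)]
      exact hc
    have hmap : ∀ b : Bool, Set.MapsTo (ρ g) (cond b S.toSubmodule T.toSubmodule : Submodule ℚ V)
        (cond b S.toSubmodule T.toSubmodule : Submodule ℚ V) := by
      rintro (_ | _)
      · exact T.apply_mem_toSubmodule g
      · exact S.apply_mem_toSubmodule g
    have := LinearMap.trace_eq_sum_trace_restrict hint hmap
    rw [Fintype.sum_bool] at this
    exact this
  rw [key]
  exact add_mem (ih _ (by omega) _ rfl) (ih _ (by omega) _ rfl)

/-! ### Permutation characters of cyclic subgroups -/

/-- The permutation representation of `G` on functions on a `G`-set, `(g • f) x = f (g⁻¹ • x)`. -/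
def permRep (G X : Type) [Group G] [MulAction G X] : Representation ℚ G (X → ℚ) where
  toFun g := LinearMap.funLeft ℚ ℚ (g⁻¹ • ·)
  map_one' := by ext; simp [LinearMap.funLeft]
  map_mul' g h := by
    refine LinearMap.ext fun f => funext fun x => ?_
    simp [LinearMap.funLeft_apply, mul_smul]

/-- The character of a permutation representation counts fixed points. -/
lemma permRep_character {G X : Type} [Group G] [MulAction G X] [Fintype X] [DecidableEq X] (u : G) :
    (permRep G X).character u = (Finset.univ.filter fun x : X => u⁻¹ • x = x).card := by
  rw [Representation.character, LinearMap.trace_eq_matrix_trace ℚ (Pi.basisFun ℚ X),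
    Matrix.trace]
  simp [permRep, LinearMap.funLeft_apply, Pi.single_apply]

/-- The character of the permutation representation of `G` on `G ⧸ ⟨g⟩`. -/
noncomputable def cycChar {G : Type} [Group G] (g u : G) : ℚ :=
  (permRep G (G ⧸ Subgroup.zpowers g)).character u

/-- A function constant on conjugacy classes and on the generators of each cyclic subgroup. -/
structure IsRatClass {G : Type} [Group G] (f : G → ℚ) : Prop where
  conj : ∀ u x, f (x * u * x⁻¹) = f u
  gen : ∀ u v, Subgroup.zpowers u = Subgroup.zpowers v → f u = f v

lemma cycChar_conj {G : Type} [Group G] (g u x : G) : cycChar g (x * u * x⁻¹) = cycChar g u :=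
  Representation.char_conj _ _ _

lemma orderOf_conj' {G : Type} [Group G] (u x : G) :
    orderOf (x * u * x⁻¹) = orderOf u :=
  (MulAut.conj x).orderOf_eq u

section Cyclic

variable {G : Type} [Group G] [Finite G]

lemma cycChar_mem (g : G) : cycChar g ∈ irrSpan G :=
  character_mem_irrSpan _ _ rfl

lemma cycChar_nonneg (g u : G) : 0 ≤ cycChar g u := by
  have := Fintype.ofFinite (G ⧸ Subgroup.zpowers g)
  rw [cycChar, permRep_character]
  positivity

lemma cycChar_self_pos (g : G) : 0 < cycChar g g := by
  classical
  have := Fintype.ofFinite (G ⧸ Subgroup.zpowers g)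
  rw [cycChar, permRep_character, Nat.cast_pos, Finset.card_pos]
  refine ⟨((1 : G) : G ⧸ Subgroup.zpowers g), ?_⟩
  rw [Finset.mem_filter, MulAction.Quotient.smul_coe, QuotientGroup.eq]
  simp

lemma exists_conj_mem_of_cycChar_ne_zero {g u : G} (h : cycChar g u ≠ 0) :
    ∃ x : G, x * u * x⁻¹ ∈ Subgroup.zpowers g := by
  classical
  have := Fintype.ofFinite (G ⧸ Subgroup.zpowers g)
  rw [cycChar, permRep_character, Nat.cast_ne_zero, Finset.card_ne_zero] at h
  obtain ⟨y, hy⟩ := h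
  obtain ⟨x, rfl⟩ := QuotientGroup.mk_surjective y
  rw [Finset.mem_filter, MulAction.Quotient.smul_coe, QuotientGroup.eq] at hy
  refine ⟨x⁻¹, ?_⟩
  simpa [mul_assoc] using hy.2

lemma cycChar_congr (g : G) {u v : G} (h : Subgroup.zpowers u = Subgroup.zpowers v) :
    cycChar g u = cycChar g v := by
  classical
  have := Fintype.ofFinite (G ⧸ Subgroup.zpowers g)
  rw [cycChar, cycChar, permRep_character, permRep_character]
  have key : ∀ {a b : G}, Subgroup.zpowers a = Subgroup.zpowers b →
      ∀ y : G ⧸ Subgroup.zpowers g, a⁻¹ • y = y → b⁻¹ • y = y := by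
    intro a b hab y hy
    have h1 : a ∈ MulAction.stabilizer G y := by
      rw [← inv_mem_iff]; exact hy
    have h2 : b ∈ Subgroup.zpowers a := hab ▸ Subgroup.mem_zpowers b
    exact inv_mem ((Subgroup.zpowers_le.2 h1) h2)
  congr 2
  ext y
  simp only [Finset.mem_filter, Finset.mem_univ, true_and]
  exact ⟨key h y, key h.symm y⟩

/-- Artin's induction theorem, by triangularity. In the inductive step, a function supported on elements
of order at most `n` is corrected, by a combination of the characters `cycChar g` with `g` of
order `n`, to one supported on elements of order less than `n`. -/
lemma IsRatClass.mem_irrSpan (n : ℕ) : ∀ f : G → ℚ, IsRatClass f →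
    (∀ u, n ≤ orderOf u → f u = 0) → f ∈ irrSpan G := by
  classical
  have := Fintype.ofFinite G
  induction n with
  | zero =>
    intro f _ h
    have : f = 0 := funext fun u => h u (Nat.zero_le _)
    rw [this]; exact zero_mem _
  | succ n ih =>
    intro f hf h
    let A : Finset G := Finset.univ.filter fun g => orderOf g = n
    -- Each conjugacy class of cyclic subgroups of order `n` is counted in `A` several times; dividing
    -- by `N` normalizes the resulting sum.
    let N : G → ℚ := fun u => ∑ g ∈ A, cycChar g u
    have hN : IsRatClass N :=
      ⟨fun u x => Finset.sum_congr rfl fun g _ => cycChar_conj g u x,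
        fun u v huv => Finset.sum_congr rfl fun g _ => cycChar_congr g huv⟩
    have hNpos : ∀ u, orderOf u = n → 0 < N u := fun u hu =>
      Finset.sum_pos' (fun g _ => cycChar_nonneg g u)
        ⟨u, by simp [A, hu], cycChar_self_pos u⟩
    let h' : G → ℚ := ∑ g ∈ A, (f g / N g) • cycChar g
    have h'_apply : ∀ u, h' u = ∑ g ∈ A, f g / N g * cycChar g u := by
      intro u; simp [h', Finset.sum_apply]
    have h'mem : h' ∈ irrSpan G :=
      Submodule.sum_mem _ fun g _ => Submodule.smul_mem _ _ (cycChar_mem g)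
    have h'rat : IsRatClass h' := by
      refine ⟨fun u x => ?_, fun u v huv => ?_⟩
      · simp only [h'_apply, cycChar_conj]
      · simp only [h'_apply, cycChar_congr _ huv]
    have hsub : f - h' ∈ irrSpan G := by
      refine ih _ ⟨fun u x => ?_, fun u v huv => ?_⟩ fun u hu => ?_
      · simp [hf.conj, h'rat.conj]
      · simp [hf.gen u v huv, h'rat.gen u v huv]
      -- A nonzero value `cycChar g u` forces a conjugate of `u` to lie in `⟨g⟩`, which it
      -- generates if `u` has order at least `orderOf g`.
      have hterm : ∀ g ∈ A, cycChar g u ≠ 0 →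
          ∃ x, Subgroup.zpowers (x * u * x⁻¹) = Subgroup.zpowers g := by
        intro g hg hne
        obtain ⟨x, hx⟩ := exists_conj_mem_of_cycChar_ne_zero hne
        refine ⟨x, Subgroup.eq_of_le_of_card_ge (Subgroup.zpowers_le.2 hx) ?_⟩
        rw [Nat.card_zpowers, Nat.card_zpowers, orderOf_conj', (Finset.mem_filter.1 hg).2]
        exact hu
      have horder : ∀ {g x : G}, Subgroup.zpowers (x * u * x⁻¹) = Subgroup.zpowers g →
          orderOf g = orderOf u := by
        intro g x hx
        rw [← Nat.card_zpowers, ← hx, Nat.card_zpowers, orderOf_conj']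
      have hterm' : ∀ g ∈ A, f g / N g * cycChar g u = f u / N u * cycChar g u := by
        intro g hg
        by_cases hz : cycChar g u = 0
        · simp [hz]
        obtain ⟨x, hx⟩ := hterm g hg hz
        rw [← hf.gen _ _ hx, ← hN.gen _ _ hx, hf.conj, hN.conj]
      have hval : h' u = f u / N u * N u := by
        rw [h'_apply, Finset.sum_congr rfl hterm', ← Finset.mul_sum]
      rw [Pi.sub_apply, hval]
      rcases hu.eq_or_lt with hu | hu
      · rw [div_mul_cancel₀ _ (hNpos u hu.symm).ne', sub_self]
      · rw [h u hu]; simp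
    simpa using add_mem hsub h'mem

end Cyclic

/-! ### Fixed spaces -/

section FixedSpace

variable {Λ G M : Type*} [Field Λ] [Group G] [AddCommGroup M] [Module Λ M]
  (ρ : Representation Λ G M)

lemma fixDim_conj (u x : G) : fixDim (ρ (x * u * x⁻¹)) = fixDim (ρ u) := by
  let e : M ≃ₗ[Λ] M := LinearEquiv.ofLinearMap (ρ x) (ρ x⁻¹)
    (by rw [← Module.End.mul_eq_comp, ← map_mul]; simp; rfl)
    (by rw [← Module.End.mul_eq_comp, ← map_mul]; simp; rfl)
  have hmap : (LinearMap.ker (ρ u - LinearMap.id)).map (e : M →ₗ[Λ] M) =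
      LinearMap.ker (ρ (x * u * x⁻¹) - LinearMap.id) := by
    ext v
    rw [Submodule.mem_map_equiv]
    simp only [LinearMap.mem_ker, LinearMap.sub_apply, LinearMap.id_apply, sub_eq_zero, map_mul,
      Module.End.mul_apply]
    change ρ u (ρ x⁻¹ v) = ρ x⁻¹ v ↔ _
    constructor
    · intro h; rw [h]; simp
    · intro h
      conv_rhs => rw [← h]
      simp
  rw [fixDim, fixDim, ← hmap]
  exact (e.submoduleMap _).finrank_eq.symm

lemma fixDim_congr {u v : G} (h : Subgroup.zpowers u = Subgroup.zpowers v) :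
    fixDim (ρ u) = fixDim (ρ v) := by
  have key : ∀ {a b : G}, Subgroup.zpowers a = Subgroup.zpowers b →
      LinearMap.ker (ρ a - LinearMap.id) ≤ LinearMap.ker (ρ b - LinearMap.id) := by
    intro a b hab m hm
    simp only [LinearMap.mem_ker, LinearMap.sub_apply, LinearMap.id_apply, sub_eq_zero] at hm ⊢
    let S : Subgroup G :=
      { carrier := {g | ρ g m = m}
        one_mem' := by simp
        mul_mem' := by
          intro g k (hg : ρ g m = m) (hk : ρ k m = m)
          change ρ (g * k) m = m
          rw [map_mul, Module.End.mul_apply, hk, hg]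
        inv_mem' := by
          intro g (hg : ρ g m = m)
          change ρ g⁻¹ m = m
          conv_lhs => rw [← hg]
          simp }
    have hle : Subgroup.zpowers a ≤ S := Subgroup.zpowers_le.2 hm
    exact hle (hab ▸ Subgroup.mem_zpowers b)
  rw [fixDim, fixDim, le_antisymm (key h) (key h.symm)]

end FixedSpace

lemma sFun_isRatClass {Λ M : Type*} {G : Type} [Field Λ] [Group G] [AddCommGroup M] [Module Λ M]
    (p : ℕ) (ρ : Representation Λ G M) : IsRatClass (sFun p ρ) where
  conj u x := by
    simp only [sFun, conj_pow, fixDim_conj]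
  gen u v h := by
    have hp : Subgroup.zpowers (u ^ p) = Subgroup.zpowers (v ^ p) := by
      have key : ∀ {a b : G}, Subgroup.zpowers a = Subgroup.zpowers b →
          Subgroup.zpowers (a ^ p) ≤ Subgroup.zpowers (b ^ p) := by
        intro a b hab
        obtain ⟨k, hk⟩ := Subgroup.mem_zpowers_iff.1 (hab ▸ Subgroup.mem_zpowers a)
        rw [Subgroup.zpowers_le, ← hk]
        refine Subgroup.mem_zpowers_iff.2 ⟨k, ?_⟩
        rw [← zpow_natCast, ← zpow_natCast, ← zpow_mul, ← zpow_mul, mul_comm]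
      exact le_antisymm (key h) (key h.symm)
    rw [sFun, sFun, fixDim_congr ρ h, fixDim_congr ρ hp]

theorem stmt7 {p : ℕ} (hp : p.Prime) {G : Type} [Group G] [Fintype G]
    (hG : IsPGroup p G)
    {Λ : Type*} [Field Λ] [Fintype Λ] (hchar : ringChar Λ ≠ p)
    {M : Type*} [AddCommGroup M] [Module Λ M] [FiniteDimensional Λ M]
    (ρ : Representation Λ G M) :
    sFun p ρ ∈ Submodule.span ℚ
      {f : G → ℚ | ∃ V : FDRep ℚ G, Simple V ∧ f = V.character} := by
  refine (sFun_isRatClass p ρ).mem_irrSpan (Fintype.card G + 1) _ fun u hu => ?_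
  have := orderOf_le_card_univ (x := u)
  omega
end
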